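/- arXiv:1202.3225 — 2 statements merged into one kernel-verified Lean document; each statement's English description precedes it below -/
import Mathlib

section
/- If u ∈ 𝒜₂ and v ∈ 𝒜₁, then there is a constant c_* ≥ 1, depending only on the C²-norms ‖u‖₂ and ‖v‖₂ (and independent of α₀, H₁, H₂), such that ‖∂^α(uv)‖₀ ≤ c_* H₁^{α₁−1} H₂^{α₂} [(|α|−2)!]^s for every α = (α₁,α₂) ≤ α₀ with |α| ≥ 2 (i.e. c_*^{−1} uv ∈ 𝒜₁). If additionally w ∈ 𝒜₂, then there is a constant c_*' ≥ 1 depending only on ‖u‖₂, ‖v‖₂, ‖w‖₂ such that c_*'^{−1} uvw ∈ 𝒜₁. -/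
open Set

noncomputable section

/-- The closed strip `R̄ = ℝ × [p₀, 0]`. -/
def Strip (p₀ : ℝ) : Set (ℝ × ℝ) := {z : ℝ × ℝ | p₀ ≤ z.2 ∧ z.2 ≤ 0}

/-- The mixed partial derivative `∂_q^a ∂_p^b f` of `f : ℝ² → ℝ` within the set `S`,
realized as the iterated Fréchet derivative within `S` applied to the corresponding
coordinate directions. -/
def mpw (S : Set (ℝ × ℝ)) (a b : ℕ) (f : ℝ × ℝ → ℝ) (z : ℝ × ℝ) : ℝ :=
  iteratedFDerivWithin ℝ (a + b) f S z
    (fun i => if (i : ℕ) < a then ((1 : ℝ), (0 : ℝ)) else ((0 : ℝ), (1 : ℝ)))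

/-- `∂_q^a ∂_p^b f` within the strip `R̄`. -/
def pd (p₀ : ℝ) (a b : ℕ) (f : ℝ × ℝ → ℝ) : ℝ × ℝ → ℝ := mpw (Strip p₀) a b f

/-- Euclidean distance on `ℝ²`. -/
def edist2 (z z' : ℝ × ℝ) : ℝ := Real.sqrt ((z.1 - z'.1) ^ 2 + (z.2 - z'.2) ^ 2)

/-- `sup_{R̄} |f|`. -/
def supS (p₀ : ℝ) (f : ℝ × ℝ → ℝ) : ℝ := sSup ((fun z => |f z|) '' Strip p₀)

/-- The Hölder seminorm of exponent `μ` of `f` over the strip `R̄`. -/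
def hsemi (p₀ μ : ℝ) (f : ℝ × ℝ → ℝ) : ℝ :=
  sSup {y | ∃ z ∈ Strip p₀, ∃ z' ∈ Strip p₀, z ≠ z' ∧ y = |f z - f z'| / (edist2 z z') ^ μ}

/-- The `C^k` sup-norm `‖f‖_k = Σ_{|α| ≤ k} sup_{R̄} |∂^α f|`. -/
def cknorm (p₀ : ℝ) (k : ℕ) (f : ℝ × ℝ → ℝ) : ℝ :=
  ∑ a ∈ Finset.range (k + 1), ∑ b ∈ Finset.range (k + 1 - a), supS p₀ (pd p₀ a b f)

/-- The Hölder norm `‖f‖_{k,μ} = ‖f‖_k + max_{|α| = k} [∂^α f]_μ`. -/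
def hnorm (p₀ μ : ℝ) (k : ℕ) (f : ℝ × ℝ → ℝ) : ℝ :=
  cknorm p₀ k f + sSup {y | ∃ a b : ℕ, a + b = k ∧ y = hsemi p₀ μ (pd p₀ a b f)}

/-- Boundedness of `f` on the strip (finiteness of `sup_{R̄} |f|`). -/
def bddS (p₀ : ℝ) (f : ℝ × ℝ → ℝ) : Prop := BddAbove ((fun z => |f z|) '' Strip p₀)

/-- Finiteness of the Hölder seminorm of `f` on the strip. -/
def bddH (p₀ μ : ℝ) (f : ℝ × ℝ → ℝ) : Prop :=
  BddAbove {y | ∃ z ∈ Strip p₀, ∃ z' ∈ Strip p₀, z ≠ z' ∧ y = |f z - f z'| / (edist2 z z') ^ μ}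

/-- Finiteness of the `C^{k,μ}(R̄)` norm. -/
def finCk (p₀ μ : ℝ) (k : ℕ) (f : ℝ × ℝ → ℝ) : Prop :=
  (∀ a b : ℕ, a + b ≤ k → bddS p₀ (pd p₀ a b f)) ∧
  (∀ a b : ℕ, a + b = k → bddH p₀ μ (pd p₀ a b f))

/-- Membership in `C^{k,μ}(R̄)`: `k` times continuously differentiable on the strip with
bounded derivatives, the top-order ones Hölder continuous of exponent `μ`. -/
def MemCk (p₀ μ : ℝ) (k : ℕ) (f : ℝ × ℝ → ℝ) : Prop :=
  ContDiffOn ℝ k f (Strip p₀) ∧ finCk p₀ μ k f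

/-- The class `𝒜_j`: functions `f ∈ C^{|α₀|,μ}(R̄)` such that
`‖∂^α f‖₀ ≤ H₁^{α₁−j} H₂^{α₂} [(|α|−j−1)!]^s` for every `α ≤ α₀` with `|α| ≥ j+1`. -/
def memA (p₀ μ s H₁ H₂ : ℝ) (α₀ : ℕ × ℕ) (j : ℕ) (f : ℝ × ℝ → ℝ) : Prop :=
  MemCk p₀ μ (α₀.1 + α₀.2) f ∧
  ∀ a b : ℕ, a ≤ α₀.1 → b ≤ α₀.2 → j + 1 ≤ a + b →
    ∀ z ∈ Strip p₀, |pd p₀ a b f z| ≤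
      H₁ ^ ((a : ℤ) - (j : ℤ)) * H₂ ^ b * (Nat.factorial (a + b - (j + 1)) : ℝ) ^ s

lemma aux_cast (S : Set (ℝ × ℝ)) (f : ℝ × ℝ → ℝ) (z : ℝ × ℝ) (g : ℕ → ℝ × ℝ) {n m : ℕ} (h : n = m) :
    iteratedFDerivWithin ℝ n f S z (fun i => g i) = iteratedFDerivWithin ℝ m f S z (fun i => g i) := by
  subst h; rfl

lemma aux_step {S : Set (ℝ × ℝ)} (hS : UniqueDiffOn ℝ S) {f : ℝ × ℝ → ℝ} {N n : ℕ}
    (hf : ContDiffOn ℝ N f S) (hn : n < N) (g : ℕ → ℝ × ℝ) {z : ℝ × ℝ} (hz : z ∈ S) :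
    HasFDerivWithinAt (fun y => iteratedFDerivWithin ℝ n f S y (fun i => g (i + 1)))
      (fderivWithin ℝ (fun y => iteratedFDerivWithin ℝ n f S y (fun i => g (i + 1))) S z) S z ∧
    fderivWithin ℝ (fun y => iteratedFDerivWithin ℝ n f S y (fun i => g (i + 1))) S z (g 0)
      = iteratedFDerivWithin ℝ (n + 1) f S z (fun i => g i) := by
  have hd : DifferentiableWithinAt ℝ (iteratedFDerivWithin ℝ n f S) S z :=
    hf.differentiableOn_iteratedFDerivWithin (by exact_mod_cast hn) hS z hz
  refine ⟨(hd.continuousMultilinear_apply_const _).hasFDerivWithinAt, ?_⟩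
  rw [fderivWithin_continuousMultilinear_apply_const_apply (hS z hz) hd]
  rw [iteratedFDerivWithin_succ_apply_left]
  rfl

lemma strip_ud {p₀ : ℝ} (hp : p₀ < 0) : UniqueDiffOn ℝ (Strip p₀) := by
  have : Strip p₀ = (univ : Set ℝ) ×ˢ Icc p₀ 0 := by ext; simp [Strip]
  rw [this]
  exact uniqueDiffOn_univ.prod (uniqueDiffOn_Icc hp)

lemma pd_diff {p₀ : ℝ} (hp : p₀ < 0) {f : ℝ × ℝ → ℝ} {N a b : ℕ}
    (hf : ContDiffOn ℝ N f (Strip p₀)) (hn : a + b < N) {z : ℝ × ℝ} (hz : z ∈ Strip p₀) :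
    DifferentiableWithinAt ℝ (pd p₀ a b f) (Strip p₀) z := by
  have := (aux_step (strip_ud hp) hf hn
    (fun i => if i < a + 1 then ((1 : ℝ), (0 : ℝ)) else ((0 : ℝ), (1 : ℝ))) hz).1.differentiableWithinAt
  simp only [add_lt_add_iff_right] at this
  exact this

lemma pd_succ_left {p₀ : ℝ} (hp : p₀ < 0) {f : ℝ × ℝ → ℝ} {N a b : ℕ}
    (hf : ContDiffOn ℝ N f (Strip p₀)) (hn : a + b < N) {z : ℝ × ℝ} (hz : z ∈ Strip p₀) :
    pd p₀ (a + 1) b f z = fderivWithin ℝ (pd p₀ a b f) (Strip p₀) z (1, 0) := by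
  have := (aux_step (strip_ud hp) hf hn
    (fun i => if i < a + 1 then ((1 : ℝ), (0 : ℝ)) else ((0 : ℝ), (1 : ℝ))) hz).2
  rw [aux_cast _ _ _ (fun i => if i < a + 1 then ((1 : ℝ), (0 : ℝ)) else ((0 : ℝ), (1 : ℝ)))
    (show a + b + 1 = a + 1 + b by omega)] at this
  simp only [add_lt_add_iff_right, Nat.zero_lt_succ, if_true] at this
  exact this.symm

lemma pd_succ_right {p₀ : ℝ} (hp : p₀ < 0) {f : ℝ × ℝ → ℝ} {N b : ℕ}
    (hf : ContDiffOn ℝ N f (Strip p₀)) (hn : b < N) {z : ℝ × ℝ} (hz : z ∈ Strip p₀) :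
    pd p₀ 0 (b + 1) f z = fderivWithin ℝ (pd p₀ 0 b f) (Strip p₀) z (0, 1) := by
  have := (aux_step (strip_ud hp) hf (n := 0 + b) (by omega)
    (fun i => if i < 0 then ((1 : ℝ), (0 : ℝ)) else ((0 : ℝ), (1 : ℝ))) hz).2
  rw [aux_cast _ _ _ (fun i => if i < 0 then ((1 : ℝ), (0 : ℝ)) else ((0 : ℝ), (1 : ℝ)))
    (show 0 + b + 1 = 0 + (b + 1) by omega)] at this
  exact this.symm

/-- Binomial double sum. -/
def dbl (a b : ℕ) (F : ℕ → ℕ → ℕ → ℕ → ℝ) : ℝ :=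
  ∑ x ∈ Finset.HasAntidiagonal.antidiagonal a, (a.choose x.1 : ℝ) *
    ∑ y ∈ Finset.HasAntidiagonal.antidiagonal b, (b.choose y.1 : ℝ) * F x.1 x.2 y.1 y.2

lemma bin_succ (n : ℕ) (f : ℕ → ℕ → ℝ) :
    ∑ x ∈ Finset.HasAntidiagonal.antidiagonal (n + 1), ((n + 1).choose x.1 : ℝ) * f x.1 x.2 =
    ∑ x ∈ Finset.HasAntidiagonal.antidiagonal n, (n.choose x.1 : ℝ) * (f x.1 (x.2 + 1) + f (x.1 + 1) x.2) := by
  rw [Finset.sum_antidiagonal_choose_succ_mul]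
  rw [← Finset.sum_add_distrib]
  refine Finset.sum_congr rfl fun x hx => ?_
  rw [Finset.HasAntidiagonal.mem_antidiagonal] at hx
  rw [← Nat.choose_symm_of_eq_add hx.symm]
  ring

lemma dbl_succ_left (a b : ℕ) (F : ℕ → ℕ → ℕ → ℕ → ℝ) :
    dbl (a + 1) b F = dbl a b (fun i i' j j' => F i (i' + 1) j j' + F (i + 1) i' j j') := by
  unfold dbl
  rw [bin_succ a (fun i i' => ∑ y ∈ Finset.HasAntidiagonal.antidiagonal b, (b.choose y.1 : ℝ) * F i i' y.1 y.2)]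
  simp only [mul_add, Finset.sum_add_distrib]

lemma dbl_succ_right (b : ℕ) (F : ℕ → ℕ → ℕ → ℕ → ℝ) :
    dbl 0 (b + 1) F = dbl 0 b (fun i i' j j' => F i i' j (j' + 1) + F i i' (j + 1) j') := by
  unfold dbl
  refine Finset.sum_congr rfl fun x _ => ?_
  rw [bin_succ b (fun j j' => F x.1 x.2 j j')]

lemma dbl_collapse (a b : ℕ) (φ : ℕ → ℕ → ℝ) :
    dbl a b (fun i i' j j' => φ (i + j) (i' + j')) =
      ∑ x ∈ Finset.HasAntidiagonal.antidiagonal (a + b), ((a + b).choose x.1 : ℝ) * φ x.1 x.2 := by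
  induction a generalizing φ with
  | zero => simp [dbl]
  | succ a ih =>
    rw [dbl_succ_left, show a + 1 + b = a + b + 1 by omega, bin_succ]
    rw [← ih (fun k l => φ k (l + 1) + φ (k + 1) l)]
    congr 1
    funext i i' j j'
    rw [show i' + 1 + j' = i' + j' + 1 by omega, show i + 1 + j = i + j + 1 by omega]

lemma dbl_mono {a b : ℕ} {F G : ℕ → ℕ → ℕ → ℕ → ℝ}
    (h : ∀ i i' j j', i + i' = a → j + j' = b → F i i' j j' ≤ G i i' j j') :
    dbl a b F ≤ dbl a b G := by
  unfold dbl
  refine Finset.sum_le_sum fun x hx => mul_le_mul_of_nonneg_left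
    (Finset.sum_le_sum fun y hy => mul_le_mul_of_nonneg_left ?_ (by positivity)) (by positivity)
  exact h _ _ _ _ (Finset.HasAntidiagonal.mem_antidiagonal.1 hx) (Finset.HasAntidiagonal.mem_antidiagonal.1 hy)

lemma dbl_congr {a b : ℕ} {F G : ℕ → ℕ → ℕ → ℕ → ℝ}
    (h : ∀ i i' j j', i + i' = a → j + j' = b → F i i' j j' = G i i' j j') :
    dbl a b F = dbl a b G :=
  le_antisymm (dbl_mono fun _ _ _ _ h1 h2 => (h _ _ _ _ h1 h2).le)
    (dbl_mono fun _ _ _ _ h1 h2 => (h _ _ _ _ h1 h2).ge)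

lemma dbl_abs (a b : ℕ) (F : ℕ → ℕ → ℕ → ℕ → ℝ) :
    |dbl a b F| ≤ dbl a b (fun i i' j j' => |F i i' j j'|) := by
  have h1 : ∀ x : ℝ, -x ≤ |x| := neg_le_abs
  rw [abs_le']
  refine ⟨dbl_mono fun _ _ _ _ _ _ => le_abs_self _, ?_⟩
  have : - dbl a b F = dbl a b (fun i i' j j' => - F i i' j j') := by
    simp [dbl]
  rw [this]
  exact dbl_mono fun _ _ _ _ _ _ => h1 _

lemma dbl_const_mul (a b : ℕ) (c : ℝ) (F : ℕ → ℕ → ℕ → ℕ → ℝ) :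
    dbl a b (fun i i' j j' => c * F i i' j j') = c * dbl a b F := by
  unfold dbl
  simp only [Finset.mul_sum]
  refine Finset.sum_congr rfl fun x _ => Finset.sum_congr rfl fun y _ => by ring

/-- derivative of a double sum -/
lemma dbl_fderiv {S : Set (ℝ × ℝ)} {z e : ℝ × ℝ} (hS : UniqueDiffWithinAt ℝ S z) {a b : ℕ}
    (U V : ℕ → ℕ → ℕ → ℕ → ℝ × ℝ → ℝ)
    (hU : ∀ i i' j j', i + i' = a → j + j' = b → DifferentiableWithinAt ℝ (U i i' j j') S z)
    (hV : ∀ i i' j j', i + i' = a → j + j' = b → DifferentiableWithinAt ℝ (V i i' j j') S z) :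
    fderivWithin ℝ (fun y => dbl a b (fun i i' j j' => U i i' j j' y * V i i' j j' y)) S z e =
    dbl a b (fun i i' j j' => U i i' j j' z * fderivWithin ℝ (V i i' j j') S z e
       + fderivWithin ℝ (U i i' j j') S z e * V i i' j j' z) := by
  have key : HasFDerivWithinAt
      (fun y => dbl a b (fun i i' j j' => U i i' j j' y * V i i' j j' y))
      (∑ x ∈ Finset.HasAntidiagonal.antidiagonal a, (a.choose x.1 : ℝ) •
    ∑ y ∈ Finset.HasAntidiagonal.antidiagonal b, (b.choose y.1 : ℝ) •
      (U x.1 x.2 y.1 y.2 z • fderivWithin ℝ (V x.1 x.2 y.1 y.2) S z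
       + V x.1 x.2 y.1 y.2 z • fderivWithin ℝ (U x.1 x.2 y.1 y.2) S z)) S z := by
    unfold dbl
    refine HasFDerivWithinAt.fun_sum fun x hx => ?_
    refine HasFDerivWithinAt.const_mul ?_ _
    refine HasFDerivWithinAt.fun_sum fun y hy => ?_
    refine HasFDerivWithinAt.const_mul ?_ _
    rw [Finset.HasAntidiagonal.mem_antidiagonal] at hx hy
    exact (hU _ _ _ _ hx hy).hasFDerivWithinAt.mul (hV _ _ _ _ hx hy).hasFDerivWithinAt
  rw [key.fderivWithin hS]
  simp only [dbl, ContinuousLinearMap.sum_apply, ContinuousLinearMap.smul_apply,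
    ContinuousLinearMap.add_apply, smul_eq_mul]
  refine Finset.sum_congr rfl fun x _ => ?_
  congr 1
  refine Finset.sum_congr rfl fun y _ => by ring

lemma leibniz {p₀ : ℝ} (hp : p₀ < 0) {u v : ℝ × ℝ → ℝ} {N : ℕ}
    (hu : ContDiffOn ℝ N u (Strip p₀)) (hv : ContDiffOn ℝ N v (Strip p₀)) (a b : ℕ)
    (hn : a + b ≤ N) : ∀ z ∈ Strip p₀,
    pd p₀ a b (fun y => u y * v y) z =
      dbl a b (fun i i' j j' => pd p₀ i j u z * pd p₀ i' j' v z) := by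
  have huv : ContDiffOn ℝ N (fun y => u y * v y) (Strip p₀) := hu.mul hv
  induction a with
  | zero =>
    induction b with
    | zero => intro z hz; simp [dbl, pd, mpw]
    | succ b ih =>
      intro z hz
      have ih := ih (by omega)
      rw [pd_succ_right hp huv (by omega) hz, fderivWithin_congr ih (ih z hz),
        dbl_fderiv (strip_ud hp z hz) (fun i i' j j' => pd p₀ i j u)
          (fun i i' j j' => pd p₀ i' j' v)
          (fun i i' j j' _ _ => pd_diff hp hu (by omega) hz)
          (fun i i' j j' _ _ => pd_diff hp hv (by omega) hz), dbl_succ_right]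
      refine dbl_congr fun i i' j j' h1 h2 => ?_
      obtain rfl : i = 0 := by omega
      obtain rfl : i' = 0 := by omega
      rw [pd_succ_right hp hu (by omega) hz, pd_succ_right hp hv (by omega) hz]
  | succ a ih =>
    intro z hz
    have ih := ih (by omega)
    rw [pd_succ_left hp huv (by omega) hz, fderivWithin_congr ih (ih z hz),
      dbl_fderiv (strip_ud hp z hz) (fun i i' j j' => pd p₀ i j u)
        (fun i i' j j' => pd p₀ i' j' v)
        (fun i i' j j' _ _ => pd_diff hp hu (by omega) hz)
        (fun i i' j j' _ _ => pd_diff hp hv (by omega) hz), dbl_succ_left]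
    refine dbl_congr fun i i' j j' h1 h2 => ?_
    rw [pd_succ_left hp hu (by omega) hz, pd_succ_left hp hv (by omega) hz]

lemma fac_up (k : ℕ) : (((k - 2).factorial : ℕ) : ℝ) * ((k : ℝ) + 1) ^ 2 ≤ 5 * (k.factorial : ℝ) := by
  rcases k with _ | _ | k
  · norm_num
  · norm_num
  · simp only [Nat.add_sub_cancel, Nat.factorial_succ]
    have : (0 : ℝ) < (k.factorial : ℝ) := by positivity
    push_cast
    have hk : (0 : ℝ) ≤ k := by positivity
    nlinarith [mul_nonneg this.le hk, mul_nonneg this.le (mul_nonneg hk hk)]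

lemma fac_low (n : ℕ) : (n.factorial : ℝ) ≤ ((n - 2).factorial : ℝ) * ((n : ℝ) + 2) ^ 2 := by
  rcases n with _ | _ | k
  · norm_num
  · norm_num
  · simp only [Nat.add_sub_cancel, Nat.factorial_succ]
    have : (0 : ℝ) < (k.factorial : ℝ) := by positivity
    push_cast
    have hk : (0 : ℝ) ≤ k := by positivity
    nlinarith [mul_nonneg this.le hk, mul_nonneg this.le (mul_nonneg hk hk)]

lemma choose_bd (k l : ℕ) :
    ((k + l).choose k : ℝ) * (((k - 2).factorial : ℝ) * ((l - 2).factorial : ℝ)) ≤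
      50 * ((k + l - 2).factorial : ℝ) * (1 / ((k : ℝ) + 1) ^ 2 + 1 / ((l : ℝ) + 1) ^ 2) := by
  have h1 := fac_up k
  have h2 := fac_up l
  have h3 := fac_low (k + l)
  have hc : ((k + l).choose k : ℝ) * ((k.factorial : ℝ) * (l.factorial : ℝ)) = ((k + l).factorial : ℝ) := by
    have := Nat.add_choose_mul_factorial_mul_factorial k l
    rw [← this]; push_cast
    rw [mul_assoc, Nat.choose_symm_add]
  push_cast at h3
  set C : ℝ := ((k + l).choose k : ℝ)
  have hC : 0 ≤ C := by positivity
  set x : ℝ := (k : ℝ) + 1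
  set y : ℝ := (l : ℝ) + 1
  have hx : 0 < x := by positivity
  have hy : 0 < y := by positivity
  set A : ℝ := ((k - 2).factorial : ℝ)
  set B : ℝ := ((l - 2).factorial : ℝ)
  set D : ℝ := ((k + l - 2).factorial : ℝ)
  have hD : 0 ≤ D := by positivity
  have hxy : (k : ℝ) + l + 2 = x + y := by simp only [x, y]; ring
  rw [hxy] at h3
  have e1 : 1 / x ^ 2 + 1 / y ^ 2 = (x ^ 2 + y ^ 2) / (x ^ 2 * y ^ 2) := by
    field_simp; ring
  rw [e1, ← mul_div_assoc, le_div_iff₀ (by positivity)]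
  calc C * (A * B) * (x ^ 2 * y ^ 2) = C * ((A * x ^ 2) * (B * y ^ 2)) := by ring
    _ ≤ C * ((5 * (k.factorial : ℝ)) * (5 * (l.factorial : ℝ))) := by gcongr
    _ = 25 * (C * ((k.factorial : ℝ) * (l.factorial : ℝ))) := by ring
    _ ≤ 25 * (D * (x + y) ^ 2) := by rw [hc]; gcongr
    _ ≤ 50 * D * (x ^ 2 + y ^ 2) := by nlinarith [mul_nonneg hD (sq_nonneg (x - y))]

lemma fac_mul_le (k l : ℕ) : ((k - 2).factorial : ℝ) * ((l - 2).factorial : ℝ) ≤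
    ((k + l - 2).factorial : ℝ) := by
  have h1 : (k - 2).factorial * (l - 2).factorial ≤ (k - 2 + (l - 2)).factorial :=
    Nat.le_of_dvd (Nat.factorial_pos _) (Nat.factorial_mul_factorial_dvd_factorial_add _ _)
  have h2 := Nat.factorial_le (show k - 2 + (l - 2) ≤ k + l - 2 by omega)
  exact_mod_cast h1.trans h2

lemma sum_sq_le (n : ℕ) : ∑ k ∈ Finset.range (n + 1), 1 / ((k : ℝ) + 1) ^ 2 ≤ 2 := by
  have : ∀ n : ℕ, ∑ k ∈ Finset.range (n + 1), 1 / ((k : ℝ) + 1) ^ 2 ≤ 2 - 1 / ((n : ℝ) + 1) := by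
    intro n
    induction n with
    | zero => norm_num
    | succ n ih =>
      rw [Finset.sum_range_succ]
      have : 1 / (((n + 1 : ℕ) : ℝ) + 1) ^ 2 ≤ 1 / ((n : ℝ) + 1) - 1 / (((n + 1 : ℕ) : ℝ) + 1) := by
        push_cast
        rw [div_sub_div _ _ (by positivity) (by positivity), div_le_div_iff₀ (by positivity) (by positivity)]
        have hn : (0 : ℝ) ≤ n := by positivity
        nlinarith [mul_nonneg hn hn]
      linarith
  refine (this n).trans ?_
  have : (0 : ℝ) ≤ 1 / ((n : ℝ) + 1) := by positivity
  linarith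

/-- The weight `[(n-2)!]^s`. -/
def hh (s : ℝ) (n : ℕ) : ℝ := ((n - 2).factorial : ℝ) ^ s

lemma hh_one_le {s : ℝ} (hs : 1 ≤ s) (n : ℕ) : 1 ≤ hh s n :=
  Real.one_le_rpow (by exact_mod_cast Nat.factorial_pos _) (by linarith)

lemma comb {s : ℝ} (hs : 1 ≤ s) (n : ℕ) :
    ∑ x ∈ Finset.HasAntidiagonal.antidiagonal n, (n.choose x.1 : ℝ) * (hh s x.1 * hh s x.2)
      ≤ 200 * hh s n := by
  have hterm : ∀ x ∈ Finset.HasAntidiagonal.antidiagonal n,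
      (n.choose x.1 : ℝ) * (hh s x.1 * hh s x.2) ≤
      50 * hh s n * (1 / ((x.1 : ℝ) + 1) ^ 2 + 1 / ((x.2 : ℝ) + 1) ^ 2) := by
    rintro ⟨k, l⟩ hx
    obtain rfl := Finset.HasAntidiagonal.mem_antidiagonal.1 hx
    have h1 := choose_bd k l
    have h2 := fac_mul_le k l
    simp only [hh]
    rw [← Real.mul_rpow (by positivity) (by positivity)]
    set X : ℝ := ((k - 2).factorial : ℝ) * ((l - 2).factorial : ℝ)
    set D : ℝ := ((k + l - 2).factorial : ℝ)
    set q : ℝ := 1 / ((k : ℝ) + 1) ^ 2 + 1 / ((l : ℝ) + 1) ^ 2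
    have hX : 0 < X := by positivity
    have hD : 0 < D := by positivity
    have hq : 0 ≤ q := by positivity
    have sp : ∀ t : ℝ, 0 < t → t ^ s = t * t ^ (s - 1) := by
      intro t ht
      rw [← Real.rpow_one_add' ht.le (by linarith)]; congr 1; ring
    rw [sp X hX, sp D hD]
    have h3 : X ^ (s - 1) ≤ D ^ (s - 1) := Real.rpow_le_rpow hX.le h2 (by linarith)
    calc ((k + l).choose k : ℝ) * (X * X ^ (s - 1))
        = (((k + l).choose k : ℝ) * X) * X ^ (s - 1) := by ring
      _ ≤ (50 * D * q) * D ^ (s - 1) := by gcongr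
      _ = _ := by ring
  refine (Finset.sum_le_sum hterm).trans ?_
  rw [← Finset.mul_sum, Finset.sum_add_distrib]
  have e1 : ∑ x ∈ Finset.HasAntidiagonal.antidiagonal n, 1 / ((x.1 : ℝ) + 1) ^ 2 ≤ 2 := by
    rw [Finset.Nat.sum_antidiagonal_eq_sum_range_succ (fun i _ => 1 / ((i : ℝ) + 1) ^ 2)]
    exact sum_sq_le n
  have e2 : ∑ x ∈ Finset.HasAntidiagonal.antidiagonal n, 1 / ((x.2 : ℝ) + 1) ^ 2 ≤ 2 := by
    rw [← Finset.Nat.sum_antidiagonal_swap]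
    exact e1
  have := hh_one_le hs n
  nlinarith

/-- The weight `H₁^{a-1} H₂^b`, set to one in orders at most one. -/
def Wt (H₁ H₂ : ℝ) (a b : ℕ) : ℝ := if a + b ≤ 1 then 1 else H₁ ^ ((a : ℤ) - 1) * H₂ ^ b

lemma Wt_pos {H₁ H₂ : ℝ} (h1 : 1 ≤ H₁) (h2 : H₁ ≤ H₂) (a b : ℕ) : 0 < Wt H₁ H₂ a b := by
  have : 0 < H₁ := by linarith
  have : 0 < H₂ := by linarith
  unfold Wt; split_ifs <;> positivity

lemma Wt_one_le {H₁ H₂ : ℝ} (h1 : 1 ≤ H₁) (h2 : H₁ ≤ H₂) (a b : ℕ) : 1 ≤ Wt H₁ H₂ a b := by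
  unfold Wt; split_ifs with h
  · exact le_rfl
  · rcases a with _ | a
    · have h3 : H₁ ≤ H₂ ^ b := h2.trans (le_self_pow₀ (by linarith) (by omega))
      simp only [Nat.cast_zero, zero_sub, zpow_neg, zpow_one]
      rw [← div_eq_inv_mul, le_div_iff₀ (by linarith)]
      linarith
    · have : ((a + 1 : ℕ) : ℤ) - 1 = (a : ℤ) := by push_cast; ring
      rw [this, zpow_natCast]
      exact one_le_mul_of_one_le_of_one_le (one_le_pow₀ h1) (one_le_pow₀ (h1.trans h2))

lemma prod_wt {H₁ H₂ G M₂ g h : ℝ} (h1 : 1 ≤ H₁) (h2 : H₁ ≤ H₂) (hM : 0 ≤ M₂) (hh1 : 1 ≤ h)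
    (i i' j j' : ℕ) (hG : G = M₂ * h) 
    (hlo : i + j ≤ 2 → g ≤ M₂)
    (hhi : 3 ≤ i + j → g ≤ M₂ * (H₁ ^ ((i : ℤ) - 2) * H₂ ^ j) * h) :
    g * Wt H₁ H₂ i' j' ≤ G * Wt H₁ H₂ (i + i') (j + j') := by
  subst hG
  have p1 : 0 < H₁ := by linarith
  have p2 : 0 < H₂ := by linarith
  have hMh : 0 ≤ M₂ * h := by positivity
  have hMle : M₂ ≤ M₂ * h := le_mul_of_one_le_right hM hh1
  by_cases hij : i + j ≤ 2
  · have hg := hlo hij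
    have hW : Wt H₁ H₂ i' j' ≤ Wt H₁ H₂ (i + i') (j + j') := by
      by_cases hl : i' + j' ≤ 1
      · have : Wt H₁ H₂ i' j' = 1 := by simp [Wt, hl]
        rw [this]; exact Wt_one_le h1 h2 _ _
      · have hl' : ¬ (i + i' + (j + j') ≤ 1) := by omega
        simp only [Wt, hl, hl', if_false]
        have : H₁ ^ ((i' : ℤ) - 1) ≤ H₁ ^ (((i + i' : ℕ) : ℤ) - 1) :=
          zpow_le_zpow_right₀ h1 (by push_cast; omega)
        have : H₂ ^ j' ≤ H₂ ^ (j + j') := pow_le_pow_right₀ (h1.trans h2) (by omega)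
        gcongr
    calc g * Wt H₁ H₂ i' j' ≤ (M₂ * h) * Wt H₁ H₂ i' j' :=
          mul_le_mul_of_nonneg_right (hg.trans hMle) (Wt_pos h1 h2 _ _).le
      _ ≤ _ := mul_le_mul_of_nonneg_left hW hMh
  · have hg := hhi (by omega)
    have hl' : ¬ (i + i' + (j + j') ≤ 1) := by omega
    have key : (H₁ ^ ((i : ℤ) - 2) * H₂ ^ j) * Wt H₁ H₂ i' j' ≤ Wt H₁ H₂ (i + i') (j + j') := by
      by_cases hl : i' + j' ≤ 1
      · simp only [Wt, hl, hl', if_true, if_false, mul_one]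
        have : H₁ ^ ((i : ℤ) - 2) ≤ H₁ ^ (((i + i' : ℕ) : ℤ) - 1) :=
          zpow_le_zpow_right₀ h1 (by push_cast; omega)
        have : H₂ ^ j ≤ H₂ ^ (j + j') := pow_le_pow_right₀ (h1.trans h2) (by omega)
        gcongr
      · simp only [Wt, hl, hl', if_false]
        have e : H₁ ^ ((i : ℤ) - 2) * H₁ ^ ((i' : ℤ) - 1) ≤ H₁ ^ (((i + i' : ℕ) : ℤ) - 1) := by
          rw [← zpow_add₀ p1.ne']
          exact zpow_le_zpow_right₀ h1 (by push_cast; omega)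
        calc _ = (H₁ ^ ((i : ℤ) - 2) * H₁ ^ ((i' : ℤ) - 1)) * H₂ ^ (j + j') := by
              rw [pow_add]; ring
          _ ≤ _ := by gcongr
    calc g * Wt H₁ H₂ i' j' ≤ (M₂ * (H₁ ^ ((i : ℤ) - 2) * H₂ ^ j) * h) * Wt H₁ H₂ i' j' :=
          mul_le_mul_of_nonneg_right hg (Wt_pos h1 h2 _ _).le
      _ = (M₂ * h) * ((H₁ ^ ((i : ℤ) - 2) * H₂ ^ j) * Wt H₁ H₂ i' j') := by ring
      _ ≤ _ := mul_le_mul_of_nonneg_left key hMh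

/-- Abstract product estimate. -/
lemma prod_est {s H₁ H₂ M₁ M₂ : ℝ} (hs : 1 ≤ s) (h1 : 1 ≤ H₁) (h2 : H₁ ≤ H₂) (hM₁ : 0 ≤ M₁)
    (hM₂ : 0 ≤ M₂) (α₀ : ℕ × ℕ) (g f : ℕ → ℕ → ℝ)
    (hlo : ∀ i j, i ≤ α₀.1 → j ≤ α₀.2 → i + j ≤ 2 → |g i j| ≤ M₂)
    (hhi : ∀ i j, i ≤ α₀.1 → j ≤ α₀.2 → 3 ≤ i + j →
      |g i j| ≤ M₂ * (H₁ ^ ((i : ℤ) - 2) * H₂ ^ j) * hh s (i + j))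
    (hf : ∀ i j, i ≤ α₀.1 → j ≤ α₀.2 → |f i j| ≤ M₁ * Wt H₁ H₂ i j * hh s (i + j))
    (a b : ℕ) (ha : a ≤ α₀.1) (hb : b ≤ α₀.2) :
    |dbl a b (fun i i' j j' => g i j * f i' j')| ≤
      (200 * M₁ * M₂) * Wt H₁ H₂ a b * hh s (a + b) := by
  refine (dbl_abs _ _ _).trans ?_
  have hW := Wt_pos h1 h2 a b
  have step : dbl a b (fun i i' j j' => |g i j * f i' j'|) ≤
      dbl a b (fun i i' j j' => (M₁ * M₂ * Wt H₁ H₂ a b) *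
        (fun k l => hh s k * hh s l) (i + j) (i' + j')) := by
    refine dbl_mono fun i i' j j' hi hj => ?_
    have hp := prod_wt (g := |g i j|) h1 h2 hM₂ (hh_one_le hs (i + j)) i i' j j' rfl
      (hlo i j (by omega) (by omega)) (hhi i j (by omega) (by omega))
    rw [hi, hj] at hp
    have hf' := hf i' j' (by omega) (by omega)
    have hl := hh_one_le hs (i' + j')
    rw [abs_mul]
    calc |g i j| * |f i' j'| ≤ |g i j| * (M₁ * Wt H₁ H₂ i' j' * hh s (i' + j')) :=
          mul_le_mul_of_nonneg_left hf' (abs_nonneg _)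
      _ = (|g i j| * Wt H₁ H₂ i' j') * (M₁ * hh s (i' + j')) := by ring
      _ ≤ (M₂ * hh s (i + j) * Wt H₁ H₂ a b) * (M₁ * hh s (i' + j')) :=
          mul_le_mul_of_nonneg_right hp (by positivity)
      _ = _ := by ring
  refine step.trans ?_
  rw [dbl_const_mul a b _ (fun i i' j j' => (fun k l => hh s k * hh s l) (i + j) (i' + j')),
    dbl_collapse a b (fun k l => hh s k * hh s l)]
  calc _ ≤ (M₁ * M₂ * Wt H₁ H₂ a b) * (200 * hh s (a + b)) :=
        mul_le_mul_of_nonneg_left (comb hs _) (by positivity)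
    _ = _ := by ring

lemma supS_nonneg (p₀ : ℝ) (f : ℝ × ℝ → ℝ) : 0 ≤ supS p₀ f := by
  apply Real.sSup_nonneg
  rintro _ ⟨z, _, rfl⟩
  exact abs_nonneg _

lemma low_bd {p₀ μ K : ℝ} {N : ℕ} {f : ℝ × ℝ → ℝ} (hf : MemCk p₀ μ N f) (hN : 2 ≤ N)
    (hK : cknorm p₀ 2 f ≤ K) {i j : ℕ} (h : i + j ≤ 2) {z : ℝ × ℝ} (hz : z ∈ Strip p₀) :
    |pd p₀ i j f z| ≤ K := by
  refine le_trans ?_ hK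
  have h1 : |pd p₀ i j f z| ≤ supS p₀ (pd p₀ i j f) :=
    le_csSup (hf.2.1 i j (by omega)) ⟨z, hz, rfl⟩
  refine h1.trans ?_
  unfold cknorm
  refine le_trans ?_ (Finset.single_le_sum (f := fun a => ∑ b ∈ Finset.range (2 + 1 - a),
    supS p₀ (pd p₀ a b f)) (fun a _ => Finset.sum_nonneg fun b _ => supS_nonneg _ _)
    (Finset.mem_range.2 (show i < 2 + 1 by omega)))
  exact Finset.single_le_sum (f := fun b => supS p₀ (pd p₀ i b f))
    (fun b _ => supS_nonneg _ _) (Finset.mem_range.2 (show j < 2 + 1 - i by omega))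

lemma two_hi {p₀ μ s H₁ H₂ M : ℝ} {α₀ : ℕ × ℕ} {f : ℝ × ℝ → ℝ} (hs : 1 ≤ s) (h1 : 1 ≤ H₁)
    (h2 : H₁ ≤ H₂) (hM : 1 ≤ M) (hf : memA p₀ μ s H₁ H₂ α₀ 2 f) {z : ℝ × ℝ} (hz : z ∈ Strip p₀)
    (i j : ℕ) (hi : i ≤ α₀.1) (hj : j ≤ α₀.2) (hij : 3 ≤ i + j) :
    |pd p₀ i j f z| ≤ M * (H₁ ^ ((i : ℤ) - 2) * H₂ ^ j) * hh s (i + j) := by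
  refine (hf.2 i j hi hj hij z hz).trans ?_
  have p1 : 0 < H₁ := by linarith
  have p2 : 0 < H₂ := by linarith
  have e : ((i + j - (2 + 1)).factorial : ℝ) ^ s ≤ hh s (i + j) := by
    unfold hh
    refine Real.rpow_le_rpow (by positivity) ?_ (by linarith)
    exact_mod_cast Nat.factorial_le (by omega)
  have w : 0 ≤ H₁ ^ ((i : ℤ) - 2) * H₂ ^ j := by positivity
  push_cast
  exact mul_le_mul (le_mul_of_one_le_left w hM) e (by positivity) (by positivity)

lemma one_all {p₀ μ s H₁ H₂ M : ℝ} {α₀ : ℕ × ℕ} {f : ℝ × ℝ → ℝ} (hs : 1 ≤ s) (h1 : 1 ≤ H₁)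
    (h2 : H₁ ≤ H₂) (hM : 1 ≤ M) (hα : 3 ≤ α₀.1 + α₀.2) (hK : cknorm p₀ 2 f ≤ M)
    (hf : memA p₀ μ s H₁ H₂ α₀ 1 f) {z : ℝ × ℝ} (hz : z ∈ Strip p₀)
    (i j : ℕ) (hi : i ≤ α₀.1) (hj : j ≤ α₀.2) :
    |pd p₀ i j f z| ≤ M * Wt H₁ H₂ i j * hh s (i + j) := by
  have hh1 := hh_one_le hs (i + j)
  by_cases hij : i + j ≤ 1
  · have := low_bd hf.1 (by omega) hK (show i + j ≤ 2 by omega) hz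
    simp only [Wt, hij, if_true, mul_one]
    nlinarith
  · refine (hf.2 i j hi hj (by omega) z hz).trans ?_
    simp only [Wt, hij, if_false]
    have p1 : 0 < H₁ := by linarith
    have p2 : 0 < H₂ := by linarith
    have w : 0 ≤ H₁ ^ ((i : ℤ) - 1) * H₂ ^ j := by positivity
    change H₁ ^ ((i : ℤ) - ((1 : ℕ) : ℤ)) * H₂ ^ j * hh s (i + j) ≤ _
    push_cast
    exact mul_le_mul_of_nonneg_right (le_mul_of_one_le_left w hM) (by linarith)

lemma two_case {p₀ μ s H₁ H₂ M : ℝ} {α₀ : ℕ × ℕ} {u v : ℝ × ℝ → ℝ} (hp : p₀ < 0) (hs : 1 ≤ s)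
    (h1 : 1 ≤ H₁) (h2 : H₁ ≤ H₂) (hM : 1 ≤ M) {M' : ℝ} (hM' : 0 ≤ M') (hα : 3 ≤ α₀.1 + α₀.2)
    (hKu : cknorm p₀ 2 u ≤ M) (hu : memA p₀ μ s H₁ H₂ α₀ 2 u)
    (hvc : ContDiffOn ℝ ((α₀.1 + α₀.2 : ℕ) : ℕ∞) v (Strip p₀)) {z : ℝ × ℝ} (hz : z ∈ Strip p₀)
    (hv : ∀ i j, i ≤ α₀.1 → j ≤ α₀.2 → |pd p₀ i j v z| ≤ M' * Wt H₁ H₂ i j * hh s (i + j))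
    (a b : ℕ) (ha : a ≤ α₀.1) (hb : b ≤ α₀.2) :
    |pd p₀ a b (fun y => u y * v y) z| ≤ (200 * M' * M) * Wt H₁ H₂ a b * hh s (a + b) := by
  rw [leibniz hp hu.1.1 hvc a b (by omega) z hz]
  exact prod_est hs h1 h2 hM' (by linarith) α₀ (fun i j => pd p₀ i j u z) (fun i j => pd p₀ i j v z)
    (fun i j _ _ h => low_bd hu.1 (by omega) hKu h hz)
    (fun i j hi hj h => two_hi hs h1 h2 hM hu hz i j hi hj h) hv a b ha hb

/-- If `u ∈ 𝒜₂` and `v ∈ 𝒜₁` then `c_*⁻¹ uv ∈ 𝒜₁` for a constant `c_*` depending only on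
the `C²`-norms of `u, v` (and independent of `α₀, H₁, H₂`); if additionally `w ∈ 𝒜₂` then
`c_*'⁻¹ uvw ∈ 𝒜₁`. -/
theorem memA_two_one_mul (p₀ μ s K : ℝ) (hp₀ : p₀ < 0) (hμ : μ ∈ Set.Ioo (0 : ℝ) 1)
    (hs : 1 ≤ s) :
    (∃ c : ℝ, 1 ≤ c ∧ ∀ (α₀ : ℕ × ℕ) (H₁ H₂ : ℝ) (u v : ℝ × ℝ → ℝ),
      3 ≤ α₀.1 + α₀.2 → 1 ≤ H₁ → H₁ ≤ H₂ →
      cknorm p₀ 2 u ≤ K → cknorm p₀ 2 v ≤ K →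
      memA p₀ μ s H₁ H₂ α₀ 2 u → memA p₀ μ s H₁ H₂ α₀ 1 v →
      ∀ a b : ℕ, a ≤ α₀.1 → b ≤ α₀.2 → 2 ≤ a + b → ∀ z ∈ Strip p₀,
        |pd p₀ a b (fun y => u y * v y) z| ≤
          c * H₁ ^ ((a : ℤ) - 1) * H₂ ^ b * (Nat.factorial (a + b - 2) : ℝ) ^ s) ∧
    (∃ c' : ℝ, 1 ≤ c' ∧ ∀ (α₀ : ℕ × ℕ) (H₁ H₂ : ℝ) (u v w : ℝ × ℝ → ℝ),
      3 ≤ α₀.1 + α₀.2 → 1 ≤ H₁ → H₁ ≤ H₂ →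
      cknorm p₀ 2 u ≤ K → cknorm p₀ 2 v ≤ K → cknorm p₀ 2 w ≤ K →
      memA p₀ μ s H₁ H₂ α₀ 2 u → memA p₀ μ s H₁ H₂ α₀ 1 v → memA p₀ μ s H₁ H₂ α₀ 2 w →
      ∀ a b : ℕ, a ≤ α₀.1 → b ≤ α₀.2 → 2 ≤ a + b → ∀ z ∈ Strip p₀,
        |pd p₀ a b (fun y => u y * v y * w y) z| ≤
          c' * H₁ ^ ((a : ℤ) - 1) * H₂ ^ b * (Nat.factorial (a + b - 2) : ℝ) ^ s) := by
  set M : ℝ := max K 1 with hMdef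
  have hM : 1 ≤ M := le_max_right _ _
  have hKM : K ≤ M := le_max_left _ _
  have hMM : 1 ≤ M * M := one_le_mul_of_one_le_of_one_le hM hM
  refine ⟨⟨200 * M * M, by nlinarith, ?_⟩, ⟨200 * (200 * M * M) * M, by nlinarith, ?_⟩⟩
  · intro α₀ H₁ H₂ u v hα h1 h2 hKu hKv hu hv a b ha hb hab z hz
    have := two_case hp₀ hs h1 h2 hM (by linarith : 0 ≤ M) hα (hKu.trans hKM) hu hv.1.1 hz
      (one_all hs h1 h2 hM hα (hKv.trans hKM) hv hz) a b ha hb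
    rw [Wt, if_neg (by omega), ← mul_assoc] at this
    exact this
  · intro α₀ H₁ H₂ u v w hα h1 h2 hKu hKv hKw hu hv hw a b ha hb hab z hz
    have huv := two_case hp₀ hs h1 h2 hM (by linarith : 0 ≤ M) hα (hKu.trans hKM) hu hv.1.1 hz
      (one_all hs h1 h2 hM hα (hKv.trans hKM) hv hz)
    have := two_case hp₀ hs h1 h2 hM (by nlinarith : 0 ≤ 200 * M * M) hα (hKw.trans hKM) hw
      (hu.1.1.mul hv.1.1) hz huv a b ha hb
    rw [Wt, if_neg (by omega), ← mul_assoc] at this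
    have e : (fun y => u y * v y * w y) = (fun y => w y * (u y * v y)) := by
      funext y; ring
    rw [e]
    exact this
end
end

section
/- For every multi-index α ∈ ℕ² the following four inequalities hold, where all sums range over multi-indices β ≤ α with 0 < |β| < |α|: (1) Σ |α|²/(|β|³(|α|−|β|)²) ≤ 8π²; (2) Σ |α|²/(|β|²(|α|−|β|)²) ≤ 8π²|α|; (3) Σ |α|/(|β|³(|α|−|β|)) ≤ 8π²; (4) Σ |α|³/(|β|⁴(|α|−|β|)³) ≤ 8π². -/
open Finset

/-- The index set: multi-indices `β ≤ α` (componentwise) with `0 < |β| < |α|`. -/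
def midx (α : ℕ × ℕ) : Finset (ℕ × ℕ) :=
  ((Finset.range (α.1 + 1)) ×ˢ (Finset.range (α.2 + 1))).filter
    (fun β => 0 < β.1 + β.2 ∧ β.1 + β.2 < α.1 + α.2)

theorem midx_zeta (n : ℕ) : ∑ k ∈ Finset.Ico 1 n, 1 / ((k : ℕ) : ℝ) ^ 2 ≤ Real.pi ^ 2 / 6 :=
  sum_le_hasSum _ (fun _ _ => by positivity) hasSum_zeta_two

theorem midx_zeta' (n : ℕ) :
    ∑ k ∈ Finset.Ico 1 n, 1 / ((n - k : ℕ) : ℝ) ^ 2 ≤ Real.pi ^ 2 / 6 := by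
  refine le_trans (le_of_eq ?_) (midx_zeta n)
  refine Finset.sum_nbij' (fun k => n - k) (fun k => n - k) ?_ ?_ ?_ ?_ ?_
  · intro k hk; simp only [Finset.mem_Ico] at *; omega
  · intro k hk; simp only [Finset.mem_Ico] at *; omega
  · intro k hk; simp only [Finset.mem_Ico] at *; omega
  · intro k hk; simp only [Finset.mem_Ico] at *; omega
  · intro k hk; rfl

theorem midx_main (α : ℕ × ℕ) (g : ℕ → ℝ) (C : ℝ) (hC : 0 ≤ C)
    (h0 : ∀ k, 0 ≤ g k)
    (hg : ∀ k m : ℕ, 0 < k → 0 < m → k + m = α.1 + α.2 →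
      2 * (k : ℝ) * g k ≤ C * (8 * (1 / (k : ℝ) ^ 2 + 1 / (m : ℝ) ^ 2))) :
    ∑ β ∈ midx α, g (β.1 + β.2) ≤ 8 * Real.pi ^ 2 * C := by
  have hmap : ∀ β ∈ midx α, β.1 + β.2 ∈ Finset.Ico 1 (α.1 + α.2) := by
    intro β hβ
    simp only [midx, Finset.mem_filter, Finset.mem_Ico] at *
    omega
  rw [← Finset.sum_fiberwise_of_maps_to hmap]
  have h1 : ∀ k ∈ Finset.Ico 1 (α.1 + α.2),
      ∑ β ∈ midx α with β.1 + β.2 = k, g (β.1 + β.2) ≤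
        C * (8 * (1 / (k : ℝ) ^ 2 + 1 / ((α.1 + α.2 - k : ℕ) : ℝ) ^ 2)) := by
    intro k hk
    rw [Finset.mem_Ico] at hk
    refine le_trans ?_ (hg k (α.1 + α.2 - k) (by omega) (by omega) (by omega))
    have h2 : ∑ β ∈ midx α with β.1 + β.2 = k, g (β.1 + β.2)
        = ∑ β ∈ midx α with β.1 + β.2 = k, g k := by
      refine Finset.sum_congr rfl fun β hβ => ?_
      rw [(Finset.mem_filter.1 hβ).2]
    rw [h2, Finset.sum_const, nsmul_eq_mul]
    refine mul_le_mul_of_nonneg_right ?_ (h0 k)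
    have h3 : ((midx α).filter (fun β => β.1 + β.2 = k)).card ≤ k + 1 := by
      rw [← Finset.Nat.card_antidiagonal k]
      refine Finset.card_le_card fun β hβ => ?_
      rw [Finset.HasAntidiagonal.mem_antidiagonal]
      exact (Finset.mem_filter.1 hβ).2
    have h4 : ((midx α).filter (fun β => β.1 + β.2 = k)).card ≤ 2 * k := by omega
    exact_mod_cast h4
  refine (Finset.sum_le_sum h1).trans ?_
  rw [← Finset.mul_sum, ← Finset.mul_sum, Finset.sum_add_distrib, mul_comm _ C]
  refine mul_le_mul_of_nonneg_left ?_ hC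
  have := midx_zeta (α.1 + α.2)
  have := midx_zeta' (α.1 + α.2)
  nlinarith [sq_nonneg Real.pi]

theorem midx_inv (k : ℕ) (hk : 0 < k) : 0 < 1 / (k : ℝ) ∧ 1 / (k : ℝ) ≤ 1 := by
  have : (1 : ℝ) ≤ k := by exact_mod_cast hk
  exact ⟨by positivity, by rw [div_le_one (by linarith)]; exact this⟩


/-- Four elementary multi-index summation inequalities (Lemma 2.6-type bounds):
for every multi-index `α ∈ ℕ²`, summing over `β ≤ α` with `0 < |β| < |α|`,
(1) `Σ |α|²/(|β|³(|α|−|β|)²) ≤ 8π²`;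
(2) `Σ |α|²/(|β|²(|α|−|β|)²) ≤ 8π²|α|`;
(3) `Σ |α|/(|β|³(|α|−|β|)) ≤ 8π²`;
(4) `Σ |α|³/(|β|⁴(|α|−|β|)³) ≤ 8π²`. -/
theorem multiindex_sum_bounds (α : ℕ × ℕ) :
    (∑ β ∈ midx α,
        ((α.1 + α.2 : ℕ) : ℝ) ^ 2 /
          (((β.1 + β.2 : ℕ) : ℝ) ^ 3 * (((α.1 + α.2) - (β.1 + β.2) : ℕ) : ℝ) ^ 2)
        ≤ 8 * Real.pi ^ 2) ∧
    (∑ β ∈ midx α,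
        ((α.1 + α.2 : ℕ) : ℝ) ^ 2 /
          (((β.1 + β.2 : ℕ) : ℝ) ^ 2 * (((α.1 + α.2) - (β.1 + β.2) : ℕ) : ℝ) ^ 2)
        ≤ 8 * Real.pi ^ 2 * ((α.1 + α.2 : ℕ) : ℝ)) ∧
    (∑ β ∈ midx α,
        ((α.1 + α.2 : ℕ) : ℝ) /
          (((β.1 + β.2 : ℕ) : ℝ) ^ 3 * (((α.1 + α.2) - (β.1 + β.2) : ℕ) : ℝ))
        ≤ 8 * Real.pi ^ 2) ∧
    (∑ β ∈ midx α,
        ((α.1 + α.2 : ℕ) : ℝ) ^ 3 /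
          (((β.1 + β.2 : ℕ) : ℝ) ^ 4 * (((α.1 + α.2) - (β.1 + β.2) : ℕ) : ℝ) ^ 3)
        ≤ 8 * Real.pi ^ 2) := by

  have e : ∀ k m : ℕ, k + m = α.1 + α.2 → α.1 + α.2 - k = m := fun k m h => by omega
  refine ⟨?_, ?_, ?_, ?_⟩
  · have := midx_main α (fun k => ((α.1 + α.2 : ℕ) : ℝ) ^ 2 /
      ((k : ℝ) ^ 3 * (((α.1 + α.2) - k : ℕ) : ℝ) ^ 2)) 1 (by norm_num)
      (fun k => by positivity) ?_
    · simpa only [mul_one] using this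
    intro k m hk hm h
    simp only [e k m h]
    rw [← h]
    have hk' : (0 : ℝ) < k := by exact_mod_cast hk
    have hm' : (0 : ℝ) < m := by exact_mod_cast hm
    have : 2 * (k : ℝ) * (((k + m : ℕ) : ℝ) ^ 2 / ((k : ℝ) ^ 3 * (m : ℝ) ^ 2))
      = 2 * (1 / (k : ℝ) + 1 / (m : ℝ)) ^ 2 := by push_cast; field_simp; ring
    rw [this, ← one_div_pow, ← one_div_pow]
    nlinarith [sq_nonneg (1 / (k : ℝ) - 1 / (m : ℝ)), sq_nonneg (1 / (k : ℝ)),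
      sq_nonneg (1 / (m : ℝ))]
  · refine midx_main α (fun k => ((α.1 + α.2 : ℕ) : ℝ) ^ 2 /
      ((k : ℝ) ^ 2 * (((α.1 + α.2) - k : ℕ) : ℝ) ^ 2)) ((α.1 + α.2 : ℕ) : ℝ) (by positivity)
      (fun k => by positivity) ?_
    intro k m hk hm h
    simp only [e k m h]
    rw [← h]
    have hk' : (0 : ℝ) < k := by exact_mod_cast hk
    have hm' : (0 : ℝ) < m := by exact_mod_cast hm
    have : 2 * (k : ℝ) * (((k + m : ℕ) : ℝ) ^ 2 / ((k : ℝ) ^ 2 * (m : ℝ) ^ 2))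
      = k * (2 * (1 / (k : ℝ) + 1 / (m : ℝ)) ^ 2) := by push_cast; field_simp; ring
    rw [this, ← one_div_pow, ← one_div_pow]
    refine mul_le_mul ?_ ?_ (by positivity) (by positivity)
    · push_cast; linarith
    nlinarith [sq_nonneg (1 / (k : ℝ) - 1 / (m : ℝ)), sq_nonneg (1 / (k : ℝ)),
      sq_nonneg (1 / (m : ℝ))]
  · have := midx_main α (fun k => ((α.1 + α.2 : ℕ) : ℝ) /
      ((k : ℝ) ^ 3 * (((α.1 + α.2) - k : ℕ) : ℝ))) 1 (by norm_num)
      (fun k => by positivity) ?_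
    · simpa only [mul_one] using this
    intro k m hk hm h
    simp only [e k m h]
    rw [← h]
    have hk' : (0 : ℝ) < k := by exact_mod_cast hk
    have hm' : (0 : ℝ) < m := by exact_mod_cast hm
    have : 2 * (k : ℝ) * (((k + m : ℕ) : ℝ) / ((k : ℝ) ^ 3 * (m : ℝ)))
      = 2 * (1 / (k : ℝ)) * (1 / (k : ℝ) + 1 / (m : ℝ)) := by push_cast; field_simp; ring
    rw [this, ← one_div_pow, ← one_div_pow]
    nlinarith [sq_nonneg (1 / (k : ℝ) - 1 / (m : ℝ)), sq_nonneg (1 / (k : ℝ)),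
      sq_nonneg (1 / (m : ℝ))]
  · have := midx_main α (fun k => ((α.1 + α.2 : ℕ) : ℝ) ^ 3 /
      ((k : ℝ) ^ 4 * (((α.1 + α.2) - k : ℕ) : ℝ) ^ 3)) 1 (by norm_num)
      (fun k => by positivity) ?_
    · simpa only [mul_one] using this
    intro k m hk hm h
    simp only [e k m h]
    rw [← h]
    have hk' : (0 : ℝ) < k := by exact_mod_cast hk
    have hm' : (0 : ℝ) < m := by exact_mod_cast hm
    have : 2 * (k : ℝ) * (((k + m : ℕ) : ℝ) ^ 3 / ((k : ℝ) ^ 4 * (m : ℝ) ^ 3))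
      = (2 * (1 / (k : ℝ) + 1 / (m : ℝ)) ^ 2) * (1 / (k : ℝ) + 1 / (m : ℝ)) := by
      push_cast; field_simp; ring
    rw [this, ← one_div_pow, ← one_div_pow]
    have h2 : 1 / (k : ℝ) + 1 / (m : ℝ) ≤ 2 := by
      linarith [(midx_inv k hk).2, (midx_inv m hm).2]
    refine (mul_le_mul_of_nonneg_left h2 (by positivity)).trans ?_
    nlinarith [sq_nonneg (1 / (k : ℝ) - 1 / (m : ℝ)), sq_nonneg (1 / (k : ℝ)),
      sq_nonneg (1 / (m : ℝ))]
end
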